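/- arXiv:2403.05740 — 6 statements merged into one kernel-verified Lean document; each statement's English description precedes it below -/
import Mathlib

section
/- Let n be a natural number and let P, Q : ℝ → Matrix (Fin n) (Fin n) ℝ and λ : Fin n → ℝ → ℝ be functions such that for every ρ, Q(ρ) is orthogonal (Q(ρ)ᵀ·Q(ρ) = Iₙ) and Q(ρ)⁻¹·P(ρ)·Q(ρ) is the diagonal matrix with diagonal entries λ₁(ρ), …, λₙ(ρ). Suppose P, Q have derivatives P'(ρ₀), Q'(ρ₀) at a point ρ₀ and each λ_l is differentiable at ρ₀. Then for each index l, the (l,l) diagonal entry of the matrix Q(ρ₀)⁻¹·P(ρ₀)·Q(ρ₀) + ρ₀·Q(ρ₀)⁻¹·P'(ρ₀)·Q(ρ₀) equals λ_l(ρ₀) + ρ₀·λ_l'(ρ₀), i.e., equals the derivative of ρ ↦ ρ·λ_l(ρ) at ρ₀. -/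
open Matrix
theorem hasDerivAt_mul_entry {n : ℕ} {A B : ℝ → Matrix (Fin n) (Fin n) ℝ}
    {A' B' : Matrix (Fin n) (Fin n) ℝ} {x : ℝ}
    (hA : ∀ i j, HasDerivAt (fun ρ => A ρ i j) (A' i j) x)
    (hB : ∀ i j, HasDerivAt (fun ρ => B ρ i j) (B' i j) x) (i j : Fin n) :
    HasDerivAt (fun ρ => (A ρ * B ρ) i j) ((A' * B x + A x * B') i j) x := by
  simp only [Matrix.add_apply, Matrix.mul_apply, ← Finset.sum_add_distrib]
  exact HasDerivAt.fun_sum fun k _ => (hA i k).mul (hB k j)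

/-- **Lemma 3.** If `Q ρ` is orthogonal and diagonalizes `P ρ` with eigenvalue
functions `lam l`, then the `(l,l)` entry of
`Q(ρ₀)⁻¹ P(ρ₀) Q(ρ₀) + ρ₀ • Q(ρ₀)⁻¹ P'(ρ₀) Q(ρ₀)` equals
`lam l ρ₀ + ρ₀ · (lam l)'(ρ₀)`, the derivative of `ρ ↦ ρ · lam l ρ` at `ρ₀`.
Derivatives of matrix-valued functions are taken entrywise. -/
theorem diag_entry_eq_deriv_rho_lambda (n : ℕ)
    (P Q : ℝ → Matrix (Fin n) (Fin n) ℝ) (lam : Fin n → ℝ → ℝ)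
    (hQorth : ∀ ρ, (Q ρ)ᵀ * Q ρ = 1)
    (hdiag : ∀ ρ, (Q ρ)⁻¹ * P ρ * Q ρ = Matrix.diagonal (fun l => lam l ρ))
    (ρ₀ : ℝ) (P' Q' : Matrix (Fin n) (Fin n) ℝ)
    (hP' : ∀ i j, HasDerivAt (fun ρ => P ρ i j) (P' i j) ρ₀)
    (hQ' : ∀ i j, HasDerivAt (fun ρ => Q ρ i j) (Q' i j) ρ₀)
    (lam' : Fin n → ℝ)
    (hlam' : ∀ l, HasDerivAt (lam l) (lam' l) ρ₀) :
    ∀ l : Fin n,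
      ((Q ρ₀)⁻¹ * P ρ₀ * Q ρ₀ + ρ₀ • ((Q ρ₀)⁻¹ * P' * Q ρ₀)) l l
        = lam l ρ₀ + ρ₀ * lam' l ∧
      HasDerivAt (fun ρ => ρ * lam l ρ) (lam l ρ₀ + ρ₀ * lam' l) ρ₀ := by
  intro l
  have hinv : ∀ ρ, (Q ρ)⁻¹ * Q ρ = 1 := fun ρ => by
    rw [Matrix.inv_eq_left_inv (hQorth ρ)]; exact hQorth ρ
  have hPQ : ∀ ρ, P ρ * Q ρ = Q ρ * Matrix.diagonal (fun l => lam l ρ) := fun ρ => by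
    rw [← hdiag ρ, ← Matrix.mul_assoc, ← Matrix.mul_assoc, mul_eq_one_comm.mp (hinv ρ),
      Matrix.one_mul]
  have hD : ∀ i j, HasDerivAt (fun ρ => Matrix.diagonal (fun l => lam l ρ) i j)
      (Matrix.diagonal lam' i j) ρ₀ := by
    intro i j
    by_cases h : i = j
    · subst h
      simpa using hlam' i
    · simpa [Matrix.diagonal_apply_ne _ h] using hasDerivAt_const ρ₀ (0 : ℝ)
  have key : P' * Q ρ₀ + P ρ₀ * Q' =
      Q' * Matrix.diagonal (fun l => lam l ρ₀) + Q ρ₀ * Matrix.diagonal lam' := by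
    ext i j
    have h1 := hasDerivAt_mul_entry hP' hQ' i j
    simp only [hPQ] at h1
    exact h1.unique (hasDerivAt_mul_entry hQ' hD i j)
  have hP : (Q ρ₀)⁻¹ * P ρ₀ = Matrix.diagonal (fun l => lam l ρ₀) * (Q ρ₀)⁻¹ := by
    rw [← hdiag ρ₀, Matrix.mul_assoc _ (Q ρ₀), mul_eq_one_comm.mp (hinv ρ₀), Matrix.mul_one]
  have key2 := congrArg (fun M => ((Q ρ₀)⁻¹ * M) l l) key
  simp only [Matrix.mul_add, ← Matrix.mul_assoc, hP, hinv, Matrix.one_mul] at key2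
  rw [Matrix.mul_assoc (Matrix.diagonal _)] at key2
  simp only [Matrix.add_apply, Matrix.diagonal_mul, Matrix.mul_diagonal,
    Matrix.diagonal_apply_eq] at key2
  have key3 : ((Q ρ₀)⁻¹ * P' * Q ρ₀) l l = lam' l := by linarith
  refine ⟨?_, ?_⟩
  · rw [hdiag, Matrix.add_apply, Matrix.smul_apply, key3]
    simp
  · simpa using (hasDerivAt_id ρ₀).fun_mul (hlam' l)
end

section
/- Let n ≥ 1, let ρ > 0, let P be an n×n real symmetric matrix, and let Q be an n×n orthogonal matrix such that QᵀPQ is the diagonal matrix Γ with diagonal entries λ₁, …, λₙ satisfying 0 < λ_l < 1/ρ for every l. Let B be an n×n real matrix such that every diagonal entry of QᵀBQ is strictly positive. Then Iₙ − ρP is invertible and tr((Iₙ − ρP)⁻¹ · B) > tr(B). -/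
open Matrix

/-- Key inequality in the proof of **Lemma 4**: if `P` is symmetric, orthogonally
diagonalized by `Q` with eigenvalues `0 < λ_l < 1/ρ`, and every diagonal entry of
`Qᵀ B Q` is positive, then `I − ρP` is invertible and
`tr((I − ρP)⁻¹ B) > tr B`. -/
theorem trace_inv_one_sub_smul_mul_gt (n : ℕ) (hn : 1 ≤ n) (ρ : ℝ) (hρ : 0 < ρ)
    (P Q B : Matrix (Fin n) (Fin n) ℝ) (hP : P.IsSymm)
    (hQ : Qᵀ * Q = 1) (lam : Fin n → ℝ)
    (hdiag : Qᵀ * P * Q = Matrix.diagonal lam)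
    (hlam : ∀ l, 0 < lam l ∧ lam l < 1 / ρ)
    (hB : ∀ l, 0 < (Qᵀ * B * Q) l l) :
    IsUnit (1 - ρ • P) ∧ B.trace < ((1 - ρ • P)⁻¹ * B).trace := by
  have hQ' : Q * Qᵀ = 1 := mul_eq_one_comm.mp hQ
  have hpos : ∀ l, 0 < 1 - ρ * lam l := fun l => by
    have h := (lt_div_iff₀ hρ).mp (hlam l).2
    linarith [mul_comm (lam l) ρ]
  have hD : Qᵀ * (1 - ρ • P) * Q = diagonal (fun l => 1 - ρ * lam l) := by
    rw [mul_sub, sub_mul, mul_one, hQ, mul_smul_comm, smul_mul_assoc, hdiag]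
    ext i j
    by_cases h : i = j
    · subst h; simp
    · simp [h]
  have hM : (1 - ρ • P) = Q * diagonal (fun l => 1 - ρ * lam l) * Qᵀ := by
    rw [← hD]
    calc (1 - ρ • P) = (Q * Qᵀ) * (1 - ρ • P) * (Q * Qᵀ) := by rw [hQ', one_mul, mul_one]
      _ = _ := by simp only [mul_assoc]
  have hDD : diagonal (fun l => 1 - ρ * lam l) * diagonal (fun l => (1 - ρ * lam l)⁻¹)
      = (1 : Matrix (Fin n) (Fin n) ℝ) := by
    rw [diagonal_mul_diagonal, ← diagonal_one]
    congr 1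
    funext l
    exact mul_inv_cancel₀ (hpos l).ne'
  have hinv : (1 - ρ • P) * (Q * diagonal (fun l => (1 - ρ * lam l)⁻¹) * Qᵀ) = 1 := by
    rw [hM]
    calc _ = Q * (diagonal (fun l => 1 - ρ * lam l) * ((Qᵀ * Q) *
          diagonal (fun l => (1 - ρ * lam l)⁻¹))) * Qᵀ := by simp only [mul_assoc]
      _ = 1 := by rw [hQ, one_mul, hDD, mul_one, hQ']
  refine ⟨IsUnit.of_mul_eq_one _ hinv, ?_⟩
  rw [inv_eq_right_inv hinv]
  have h1 : B.trace = (Qᵀ * B * Q).trace := by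
    rw [trace_mul_comm, ← mul_assoc, hQ', one_mul]
  have h2 : (Q * diagonal (fun l => (1 - ρ * lam l)⁻¹) * Qᵀ * B).trace
      = (diagonal (fun l => (1 - ρ * lam l)⁻¹) * (Qᵀ * B * Q)).trace := by
    rw [mul_assoc, mul_assoc, trace_mul_comm]
    simp only [mul_assoc]
  rw [h1, h2]
  simp only [trace, diag_apply, diagonal_mul]
  refine Finset.sum_lt_sum_of_nonempty ⟨⟨0, hn⟩, Finset.mem_univ _⟩ fun l _ => ?_
  refine lt_mul_of_one_lt_left (hB l) ((one_lt_inv₀ (hpos l)).mpr ?_)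
  linarith [mul_pos hρ (hlam l).1]
end

section
/- Let σ₁², σ₂², σ₁₂ be real numbers and let Σ_x be the 2×2 real symmetric matrix [[σ₁², σ₁₂],[σ₁₂, σ₂²]]; assume Σ_x is positive semidefinite and let ρ ≥ 0. Set Δ_x := σ₁²σ₂² − σ₁₂² and Δ_r := 1 + ρ(σ₁² + σ₂² + ρΔ_x). Then I₂ + ρΣ_x is invertible, Δ_r = det(I₂ + ρΣ_x) > 0, and Σ_c := Σ_x − ρ·Σ_x·(I₂ + ρΣ_x)⁻¹·Σ_x equals (1/Δ_r)·[[σ₁² + ρΔ_x, σ₁₂],[σ₁₂, σ₂² + ρΔ_x]]. -/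
open Matrix

/-- **Proposition 13.** For the 2×2 positive semidefinite matrix
`Σ_x = [[σ₁², σ₁₂],[σ₁₂, σ₂²]]` and `ρ ≥ 0`, with `Δ_x = σ₁²σ₂² − σ₁₂²` and
`Δ_r = 1 + ρ(σ₁² + σ₂² + ρΔ_x)`, the matrix `I₂ + ρΣ_x` is invertible with
determinant `Δ_r > 0`, and
`Σ_c = Σ_x − ρΣ_x(I₂+ρΣ_x)⁻¹Σ_x = (1/Δ_r)[[σ₁²+ρΔ_x, σ₁₂],[σ₁₂, σ₂²+ρΔ_x]]`. -/
theorem sigma_c_formula (σ1 σ2 σ12 : ℝ) (ρ : ℝ) (hρ : 0 ≤ ρ)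
    (Sx : Matrix (Fin 2) (Fin 2) ℝ) (hSx : Sx = !![σ1, σ12; σ12, σ2])
    (hpsd : Sx.PosSemidef)
    (Dx Dr : ℝ) (hDx : Dx = σ1 * σ2 - σ12 ^ 2)
    (hDr : Dr = 1 + ρ * (σ1 + σ2 + ρ * Dx)) :
    IsUnit (1 + ρ • Sx) ∧
    (1 + ρ • Sx).det = Dr ∧ 0 < Dr ∧
    Sx - ρ • (Sx * (1 + ρ • Sx)⁻¹ * Sx)
      = Dr⁻¹ • !![σ1 + ρ * Dx, σ12; σ12, σ2 + ρ * Dx] := by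
  have h1 : 0 ≤ σ1 := by simpa [hSx] using hpsd.diag_nonneg (i := 0)
  have h2 : 0 ≤ σ2 := by simpa [hSx] using hpsd.diag_nonneg (i := 1)
  have h3 : 0 ≤ Dx := by
    have h := hpsd.det_nonneg
    rw [hSx, Matrix.det_fin_two_of] at h
    rw [hDx]; linarith
  have hpos : 0 < Dr := by rw [hDr]; positivity
  have hM : 1 + ρ • Sx = !![1 + ρ * σ1, ρ * σ12; ρ * σ12, 1 + ρ * σ2] := by
    rw [hSx]
    ext i j
    fin_cases i <;> fin_cases j <;> simp
  have hdet : (1 + ρ • Sx).det = Dr := by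
    rw [hM, Matrix.det_fin_two_of, hDr, hDx]; ring
  have hne : Dr ≠ 0 := hpos.ne'
  refine ⟨?_, hdet, hpos, ?_⟩
  · rw [Matrix.isUnit_iff_isUnit_det, hdet]
    exact hne.isUnit
  · have hinv : (1 + ρ • Sx)⁻¹
        = Dr⁻¹ • !![1 + ρ * σ2, -(ρ * σ12); -(ρ * σ12), 1 + ρ * σ1] := by
      rw [Matrix.inv_def, hdet, hM, Matrix.adjugate_fin_two_of, Ring.inverse_eq_inv']
    rw [hinv, hSx]
    ext i j
    fin_cases i <;> fin_cases j <;>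
      simp [Matrix.mul_apply, Fin.sum_univ_two] <;> field_simp <;>
      rw [hDr, hDx] <;> ring
end

section
/- Let σ₁², σ₂², σ₁₂ be real numbers and let Σ_x be the 2×2 real symmetric matrix [[σ₁², σ₁₂],[σ₁₂, σ₂²]]; assume Σ_x is positive semidefinite and let ρ ≥ 0. Set Δ_x := σ₁²σ₂² − σ₁₂² and Δ_r := 1 + ρ(σ₁² + σ₂² + ρΔ_x), and define Σ_c := Σ_x − ρ·Σ_x·(I₂ + ρΣ_x)⁻¹·Σ_x. Then det(Σ_c) = Δ_x / Δ_r. -/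
open Matrix

/-- Determinant identity from the proof of **Proposition 14**: with
`Σ_x = [[σ₁², σ₁₂],[σ₁₂, σ₂²]]` positive semidefinite, `ρ ≥ 0`,
`Δ_x = σ₁²σ₂² − σ₁₂²`, `Δ_r = 1 + ρ(σ₁² + σ₂² + ρΔ_x)` and
`Σ_c = Σ_x − ρΣ_x(I₂+ρΣ_x)⁻¹Σ_x`, one has `det Σ_c = Δ_x / Δ_r`. -/
theorem det_sigma_c (σ1 σ2 σ12 : ℝ) (ρ : ℝ) (hρ : 0 ≤ ρ)
    (Sx : Matrix (Fin 2) (Fin 2) ℝ) (hSx : Sx = !![σ1, σ12; σ12, σ2])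
    (hpsd : Sx.PosSemidef)
    (Dx Dr : ℝ) (hDx : Dx = σ1 * σ2 - σ12 ^ 2)
    (hDr : Dr = 1 + ρ * (σ1 + σ2 + ρ * Dx))
    (Sc : Matrix (Fin 2) (Fin 2) ℝ)
    (hSc : Sc = Sx - ρ • (Sx * (1 + ρ • Sx)⁻¹ * Sx)) :
    Sc.det = Dx / Dr := by
  have hdet : Sx.det = Dx := by
    rw [hSx, hDx, Matrix.det_fin_two_of]; ring
  have hM : (1 + ρ • Sx).det = Dr := by
    rw [hDr, hDx, hSx, Matrix.det_fin_two]
    simp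
    ring
  have h1 : 0 ≤ σ1 := by
    have h := hpsd.diag_nonneg (i := 0)
    simpa [hSx] using h
  have h2 : 0 ≤ σ2 := by
    have h := hpsd.diag_nonneg (i := 1)
    simpa [hSx] using h
  have h3 : 0 ≤ Dx := hdet ▸ hpsd.det_nonneg
  have hpos : 0 < Dr := by
    rw [hDr]; positivity
  have hu : IsUnit (1 + ρ • Sx).det := by
    rw [hM]; exact hpos.ne'.isUnit
  have key : Sc = Sx * (1 + ρ • Sx)⁻¹ := by
    have e : Sx = Sx * (1 + ρ • Sx)⁻¹ * (1 + ρ • Sx) := by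
      rw [Matrix.mul_assoc, Matrix.nonsing_inv_mul _ hu, Matrix.mul_one]
    rw [Matrix.mul_add, Matrix.mul_one, Matrix.mul_smul] at e
    rw [hSc]
    exact sub_eq_of_eq_add e
  rw [key, Matrix.det_mul, Matrix.det_nonsing_inv, hdet, hM, Ring.inverse_eq_inv', div_eq_mul_inv]
end

section
/- Let σ₁², σ₂², σ₁₂, ρ be real numbers with 0 ≤ σ₁² ≤ 1, 0 ≤ σ₂² ≤ 1, ρ ≥ 0, and set Δ_x := σ₁²σ₂² − σ₁₂²; assume Δ_x ≥ 0. Then ( (σ₁² + σ₂²)/2 + ρΔ_x ) / ( 1 + ρ(σ₁² + σ₂² + ρΔ_x) ) ≤ 1/(1 + ρ). -/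
/-- Inequality `½ tr(Σ_c) ≤ 1/(1+ρ)` from Section V-E of the paper, by direct
computation: for `0 ≤ σ₁² ≤ 1`, `0 ≤ σ₂² ≤ 1`, `ρ ≥ 0` and
`Δ_x = σ₁²σ₂² − σ₁₂² ≥ 0`,
`((σ₁²+σ₂²)/2 + ρΔ_x) / (1 + ρ(σ₁²+σ₂²+ρΔ_x)) ≤ 1/(1+ρ)`. -/
theorem half_trace_sigma_c_le (σ1 σ2 σ12 ρ : ℝ)
    (hσ1 : 0 ≤ σ1) (hσ1' : σ1 ≤ 1) (hσ2 : 0 ≤ σ2) (hσ2' : σ2 ≤ 1)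
    (hρ : 0 ≤ ρ) (Dx : ℝ) (hDx : Dx = σ1 * σ2 - σ12 ^ 2) (hDx0 : 0 ≤ Dx) :
    ((σ1 + σ2) / 2 + ρ * Dx) / (1 + ρ * (σ1 + σ2 + ρ * Dx)) ≤ 1 / (1 + ρ) := by
  have h1 : 0 ≤ (σ1 + σ2) / 2 - Dx := by
    nlinarith [mul_nonneg hσ1 (sub_nonneg.2 hσ2'), mul_nonneg hσ2 (sub_nonneg.2 hσ1'), sq_nonneg σ12]
  have h2 : 0 ≤ ρ * ((σ1 + σ2) / 2 - Dx) := mul_nonneg hρ h1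
  have h3 : 0 < 1 + ρ * (σ1 + σ2 + ρ * Dx) := by positivity
  have h4 : 0 < 1 + ρ := by positivity
  rw [div_le_div_iff₀ h3 h4]
  nlinarith
end

section
/- Let n be a natural number, let M be an n×n real symmetric matrix such that both M and Iₙ − M are positive semidefinite, and let ρ ≥ 0. Then Iₙ + ρM is invertible and tr((Iₙ + ρM)⁻¹ · M) ≤ n/(1 + ρ). -/
open Matrix

/-- Inequality (154) of the paper: if `0 ≤ M ≤ Iₙ` in the positive semidefinite
order and `ρ ≥ 0`, then `Iₙ + ρM` is invertible and
`tr((Iₙ + ρM)⁻¹ M) ≤ n/(1+ρ)`. -/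
theorem trace_filtering_error_le (n : ℕ) (M : Matrix (Fin n) (Fin n) ℝ)
    (hM : M.PosSemidef) (hM1 : ((1 : Matrix (Fin n) (Fin n) ℝ) - M).PosSemidef)
    (ρ : ℝ) (hρ : 0 ≤ ρ) :
    IsUnit (1 + ρ • M) ∧ ((1 + ρ • M)⁻¹ * M).trace ≤ n / (1 + ρ) := by
  have hA : (1 + ρ • M).PosDef := Matrix.PosDef.one.add_posSemidef (hM.smul hρ)
  refine ⟨hA.isUnit, ?_⟩
  have hdet : IsUnit (1 + ρ • M).det := (Matrix.isUnit_iff_isUnit_det _).1 hA.isUnit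
  have hinv : (1 + ρ • M)⁻¹ * (1 + ρ • M) = 1 := Matrix.nonsing_inv_mul _ hdet
  have hB : ((1 + ρ • M)⁻¹).PosSemidef := hA.inv.posSemidef
  generalize (1 + ρ • M)⁻¹ = B at hinv hB
  have hnn : 0 ≤ (B * (1 - M)).trace := by
    open scoped MatrixOrder ComplexOrder in
    obtain ⟨C, hC⟩ := CStarAlgebra.nonneg_iff_eq_star_mul_self.mp hM1.nonneg
    rw [hC, ← Matrix.mul_assoc, Matrix.trace_mul_comm, ← Matrix.mul_assoc]
    exact (hB.mul_mul_conjTranspose_same C).trace_nonneg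
  have h1 := congrArg Matrix.trace hinv
  simp only [Matrix.mul_add, Matrix.mul_sub, Matrix.mul_one, Matrix.mul_smul, Matrix.trace_add,
    Matrix.trace_sub, Matrix.trace_smul, Matrix.trace_one, Fintype.card_fin, smul_eq_mul]
    at h1 hnn
  rw [le_div_iff₀ (by linarith)]
  linarith
end
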